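/- Let n ∈ O_K be primary and not a perfect square, and let χ̃_n be the Dirichlet character modulo 2n defined by χ̃_n = ψ_j · (·/n) when n is of type j (j = 1, 2). Then for every y > 0, ∑_{0 ≠ m ∈ O_K} χ̃_n(m) exp(−2πy N(m)) = (1/(2y N(2n))) ∑_{0 ≠ k ∈ O_K} g(k, χ̃_n) exp(−π N(k)/(2y N(2n))). -/

import Mathlib

open Complex Real Filter Topology
open scoped BigOperators Classical

noncomputable section

/-- The norm `N(n)` of a Gaussian integer, as a real number. -/
def Nm (n : GaussianInt) : ℝ := ((Zsqrtd.norm n : ℤ) : ℝ)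

/-- The element `1 + i` of `ℤ[i]`. -/
def ωg : GaussianInt := ⟨1, 1⟩

/-- The element `i` of `ℤ[i]`. -/
def ig : GaussianInt := ⟨0, 1⟩

/-- `n` is primary: `n ≡ 1 mod (1+i)³`. -/
def IsPrimary (n : GaussianInt) : Prop := ωg ^ 3 ∣ (n - 1)

/-- `ẽ(z) = exp(2πi(z/(2i) − z̄/(2i)))`. -/
def eT (z : ℂ) : ℂ :=
  Complex.exp (2 * (Real.pi : ℂ) * Complex.I *
    (z / (2 * Complex.I) - (starRingEnd ℂ) z / (2 * Complex.I)))

/-- `χ a n = (a/n)` is the quadratic residue symbol of `ℤ[i]`: on odd primes `ϖ` it is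
the `±1` (or `0`) value determined by `(a/ϖ) ≡ a^((N(ϖ)-1)/2) mod ϖ`, it is extended
multiplicatively in the denominator over odd elements, and equals `1` on units. -/
structure IsQuadSym (χ : GaussianInt → GaussianInt → ℤ) : Prop where
  val_prime : ∀ ϖ a : GaussianInt, Prime ϖ → ¬ ωg ∣ ϖ → ¬ ϖ ∣ a →
    (χ a ϖ = 1 ∨ χ a ϖ = -1) ∧
      ϖ ∣ (a ^ (((Zsqrtd.norm ϖ).toNat - 1) / 2) - (χ a ϖ : GaussianInt))
  zero_of_dvd : ∀ ϖ a : GaussianInt, Prime ϖ → ϖ ∣ a → χ a ϖ = 0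
  mul_den : ∀ a m n : GaussianInt, ¬ ωg ∣ m → ¬ ωg ∣ n → χ a (m * n) = χ a m * χ a n
  unit_den : ∀ a u : GaussianInt, IsUnit u → χ a u = 1

/-- `L s m = L(s, χ_m)`: the Hecke `L`-function attached to the quadratic symbol `(m/·)`,
given by its Dirichlet series over primary elements (= odd ideals) for `Re s > 1`,
and analytic away from `s = 1`. -/
def IsHeckeL (χ : GaussianInt → GaussianInt → ℤ) (L : ℂ → GaussianInt → ℂ) : Prop :=
  (∀ (m : GaussianInt) (s : ℂ), 1 < s.re →
      L s m = ∑' n : {n : GaussianInt // IsPrimary n}, (χ m n.1 : ℂ) / (Nm n.1 : ℂ) ^ s) ∧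
    ∀ m : GaussianInt, DifferentiableOn ℂ (fun s => L s m) {s : ℂ | s ≠ 1}

/-- The generalized Riemann hypothesis for the family of quadratic Hecke `L`-functions. -/
def GRHfor (L : ℂ → GaussianInt → ℂ) : Prop :=
  ∀ m : GaussianInt, m ≠ 0 → ∀ s : ℂ, 0 < s.re → s.re < 1 → L s m = 0 → s.re = 1 / 2

/-- The absolute norm of an ideal of `ℤ[i]`, as a complex number. -/
def idN (I : Ideal GaussianInt) : ℂ := (Nat.card (GaussianInt ⧸ I) : ℂ)

/-- The Dedekind zeta function of `ℚ(i)`. -/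
def IsDedekindZetaK (Z : ℂ → ℂ) : Prop :=
  (∀ s : ℂ, 1 < s.re → Z s = ∑' I : {I : Ideal GaussianInt // I ≠ ⊥}, idN I.1 ^ (-s)) ∧
    DifferentiableOn ℂ Z {s : ℂ | s ≠ 1}

/-- `ζ_K^{(2)}`: the Euler product of `ζ_K` with the factor at the prime `(1+i)` omitted. -/
def zeta2 (Z : ℂ → ℂ) (s : ℂ) : ℂ := Z s * (1 - (2 : ℂ) ^ (-s))

/-- `P(z) = ∏_ϖ (1 + ((N(ϖ)^{z-1/2} − 1)(N(ϖ) + 1))⁻¹)`, over all primes of `ℤ[i]`. -/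
def Pfun (z : ℂ) : ℂ :=
  ∏' I : {I : Ideal GaussianInt // I ≠ ⊥ ∧ I.IsPrime},
    (1 + 1 / ((idN I.1 ^ (z - 1 / 2) - 1) * (idN I.1 + 1)))

/-- The Euler product over odd primes appearing in the ratios-conjecture main term. -/
def ratioEuler (α β : ℂ) : ℂ :=
  ∏' I : {I : Ideal GaussianInt // I ≠ ⊥ ∧ I.IsPrime ∧ (2 : GaussianInt) ∉ I},
    (1 + (idN I.1 ^ (α - β) - 1) / (idN I.1 ^ (1 + α - β) * (idN I.1 ^ (1 + α + β) - 1)))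

/-- `g r n` is the quadratic Gauss sum `g(r,n) = ∑_{x mod n} (x/n) ẽ(rx/n)`:
for any complete residue system `S` modulo `n` it is given by the indicated finite sum. -/
def IsGaussSum (χ : GaussianInt → GaussianInt → ℤ) (g : GaussianInt → GaussianInt → ℂ) : Prop :=
  ∀ r n : GaussianInt, n ≠ 0 → ∀ S : Finset GaussianInt,
    (∀ z : GaussianInt, ∃! x, x ∈ S ∧ n ∣ (z - x)) →
    g r n = ∑ x ∈ S, (χ x n : ℂ) * eT (GaussianInt.toComplex (r * x) / GaussianInt.toComplex n)

/-- A Dirichlet character modulo `q` on `ℤ[i]` (extended by zero). -/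
def IsDirichletChar (q : GaussianInt) (χ : GaussianInt → ℂ) : Prop :=
  χ 1 = 1 ∧ (∀ a b : GaussianInt, χ (a * b) = χ a * χ b) ∧
    (∀ a b : GaussianInt, q ∣ (a - b) → χ a = χ b) ∧
    (∀ a : GaussianInt, IsCoprime a q → ‖χ a‖ = 1) ∧
    (∀ a : GaussianInt, ¬ IsCoprime a q → χ a = 0)

/-- The Gauss sum `g(r,χ) = ∑_{x mod q} χ(x) ẽ(rx/q)` of a Dirichlet character modulo `q`. -/
def IsGaussSumChar (q : GaussianInt) (χ : GaussianInt → ℂ) (g : GaussianInt → ℂ) : Prop :=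
  ∀ r : GaussianInt, ∀ S : Finset GaussianInt,
    (∀ z : GaussianInt, ∃! x, x ∈ S ∧ q ∣ (z - x)) →
    g r = ∑ x ∈ S, χ x * eT (GaussianInt.toComplex (r * x) / GaussianInt.toComplex q)

/-- A primary `n = a + bi` is of type 1 if `a ≡ 1, b ≡ 0 (mod 4)` (else it is of type 2). -/
def IsTypeOne (n : GaussianInt) : Prop := n.re % 4 = 1 ∧ n.im % 4 = 0

/-- `ψ₁`, the principal character modulo `2` on `ℤ[i]`. -/
def psi1 (m : GaussianInt) : ℂ := if IsCoprime m 2 then 1 else 0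

/-- `ψ₂`, the primitive quadratic character modulo `2` on `ℤ[i]`:
`ψ₂(m) = 1` for `m ≡ 1 (mod 2)`, `ψ₂(m) = −1` for `m ≡ i (mod 2)`, and `0` otherwise. -/
def psi2 (m : GaussianInt) : ℂ :=
  if (2 : GaussianInt) ∣ (m - 1) then 1 else if (2 : GaussianInt) ∣ (m - ig) then -1 else 0

/-- `χ̃_n = ψ_j · (·/n)`, where `j` is the type of the primary element `n`. -/
def tchi (χ : GaussianInt → GaussianInt → ℤ) (n m : GaussianInt) : ℂ :=
  (if IsTypeOne n then psi1 m else psi2 m) * (χ m n : ℂ)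

/-!
The proof is Poisson summation on `ℤ[i]`. Splitting the sum over `m` into residue classes modulo
`q = 2n` and applying the functional equation of the Jacobi theta function in each of the two real
coordinates turns the theta series of any `q`-periodic function `f` into the series of its Gauss
sums, both taken over all of `ℤ[i]`. The terms at `0` vanish when `f` is a nonprincipal character:
if `f a ≠ 1` with `a` coprime to `q`, replacing `x` by `a x` only changes the residue system, so it
preserves `g 0 = ∑ f x`, but it also multiplies this sum by `f a`.

That `χ̃_n` is nonprincipal is where `n` must not be a square. At an odd prime `ϖ` the symbol is the
quadratic character of the field `ℤ[i]/ϖ`, which takes the value `-1`. For `n` of type 1 some prime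
divides `n` to an odd power, since `n` is not associated to a square, and a nonresidue modulo that
prime lifts by the Chinese remainder theorem. In the remaining case `ψ₂(i) = -1` suffices.
-/

section ResidueSystem

variable {R : Type*} [CommRing R] {q : R} {S : Finset R}

/-- `S` is a complete residue system modulo `q`, spelled out as in the definition
`IsGaussSumChar` of Gauss sums. -/
def IsResidueSystem (q : R) (S : Finset R) : Prop :=
  ∀ z : R, ∃! x, x ∈ S ∧ q ∣ (z - x)

theorem exists_isResidueSystem (q : R) [Finite (R ⧸ Ideal.span {q})] :
    ∃ S : Finset R, IsResidueSystem q S := by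
  have := Fintype.ofFinite (R ⧸ Ideal.span {q})
  have dvd_sub_iff (a b : R) : q ∣ a - b ↔
      Ideal.Quotient.mk (Ideal.span {q}) a = Ideal.Quotient.mk (Ideal.span {q}) b := by
    rw [Ideal.Quotient.eq, Ideal.mem_span_singleton]
  choose lift mk_lift using Ideal.Quotient.mk_surjective (I := Ideal.span {q})
  refine ⟨Finset.univ.image lift, fun z ↦ ⟨lift (Ideal.Quotient.mk _ z), ⟨by simp, ?_⟩, ?_⟩⟩
  · rw [dvd_sub_iff, mk_lift]
  · rintro x ⟨hx, hzx⟩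
    obtain ⟨c, -, rfl⟩ := Finset.mem_image.1 hx
    rw [dvd_sub_iff, mk_lift] at hzx
    rw [hzx]

namespace IsResidueSystem

theorem eq_of_dvd_sub (hS : IsResidueSystem q S) {x y : R} (hx : x ∈ S) (hy : y ∈ S)
    (h : q ∣ x - y) : x = y :=
  (hS x).unique ⟨hx, by simp⟩ ⟨hy, h⟩

theorem injOn_mul_left (hS : IsResidueSystem q S) {a : R} (ha : IsCoprime a q) :
    Set.InjOn (a * ·) (S : Set R) := by
  intro x hx y hy hxy
  refine hS.eq_of_dvd_sub hx hy (ha.symm.dvd_of_dvd_mul_left ?_)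
  rw [mul_sub, show a * x = a * y from hxy, sub_self]
  exact dvd_zero q

theorem image_mul_left [DecidableEq R] (hS : IsResidueSystem q S) {a : R} (ha : IsCoprime a q) :
    IsResidueSystem q (S.image (a * ·)) := by
  intro z
  obtain ⟨b, c, hbc⟩ := ha
  obtain ⟨x, ⟨hx, d, hd⟩, -⟩ := hS (b * z)
  refine ⟨a * x, ⟨Finset.mem_image_of_mem _ hx, c * z + a * d, ?_⟩, ?_⟩
  · linear_combination (-z) * hbc + a * hd
  · rintro _ ⟨hw, e, he⟩
    obtain ⟨y, hy, rfl⟩ := Finset.mem_image.1 hw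
    have hyx : q ∣ y - x := ⟨d - b * e + c * y, by linear_combination (-y) * hbc + hd - b * he⟩
    rw [hS.eq_of_dvd_sub hy hx hyx]

theorem hasSum_of_hasSum_add_mul [IsLeftCancelMulZero R] {E : Type*} [AddCommMonoid E]
    [TopologicalSpace E] [ContinuousAdd E] (hS : IsResidueSystem q S) (hq : q ≠ 0) {F c : R → E}
    (h : ∀ x ∈ S, HasSum (fun l ↦ F (x + q * l)) (c x)) : HasSum F (∑ x ∈ S, c x) := by
  set coset : R → Set R := fun x ↦ Set.range fun l ↦ x + q * l with coset_def
  have mem_coset (m x : R) : m ∈ coset x ↔ q ∣ m - x := by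
    simp only [coset_def, Set.mem_range, dvd_def, sub_eq_iff_eq_add', eq_comm (a := m)]
  have hasSum_coset : ∀ x ∈ S, HasSum ((coset x).indicator F) (c x) := fun x hx ↦ by
    have add_mul_injective : Function.Injective fun l ↦ x + q * l :=
      (add_right_injective x).comp (mul_right_injective₀ hq)
    exact hasSum_subtype_iff_indicator.1 (add_mul_injective.hasSum_range_iff.2 (h x hx))
  convert hasSum_sum hasSum_coset using 1
  ext m
  obtain ⟨x, ⟨hxS, hmx⟩, hx_unique⟩ := hS m
  rw [Finset.sum_eq_single_of_mem x hxS, Set.indicator_of_mem ((mem_coset m x).2 hmx)]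
  exact fun b hb hbx ↦ Set.indicator_of_notMem
    (fun hmb ↦ hbx (hx_unique b ⟨hb, (mem_coset m b).1 hmb⟩)) F

end IsResidueSystem

theorem exists_dvd_sub_dvd_sub_of_isCoprime {x y : R} (h : IsCoprime x y) (c d : R) :
    ∃ a, x ∣ a - c ∧ y ∣ a - d := by
  obtain ⟨r, s, hrs⟩ := h
  exact ⟨d * (r * x) + c * (s * y), ⟨(d - c) * r, by linear_combination c * hrs⟩,
    ⟨(c - d) * s, by linear_combination d * hrs⟩⟩

theorem isCoprime_of_dvd_sub {a b : R} (h : q ∣ a - b) (hb : IsCoprime b q) : IsCoprime a q := by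
  obtain ⟨c, hc⟩ := h
  rw [sub_eq_iff_eq_add'.1 hc]
  exact (IsCoprime.add_mul_left_left_iff).2 hb

end ResidueSystem

section Theta

variable {t : ℝ}

theorem hasSum_cexp_mul_cexp_neg_sq_div (ht : 0 < t) (s : ℝ) :
    HasSum (fun k : ℤ ↦ cexp (2 * π * I * k * s) * cexp ((-(π * (k : ℝ) ^ 2 / t) : ℝ) : ℂ))
      (jacobiTheta₂ s (I / t)) := by
  have him : 0 < (I / (t : ℂ)).im := by simp [ht]
  convert hasSum_jacobiTheta₂_term (s : ℂ) him using 2 with k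
  rw [jacobiTheta₂_term, ← Complex.exp_add]
  congr 1
  push_cast
  linear_combination (-π * k ^ 2 / t : ℂ) * I_sq

theorem jacobiTheta₂_ofReal_I_div (ht : 0 < t) (s : ℝ) :
    jacobiTheta₂ s (I / t) = √t * (cexp (-(π * t * s ^ 2)) * jacobiTheta₂ (I * t * s) (I * t)) := by
  have htc : (t : ℂ) ≠ 0 := by exact_mod_cast ht.ne'
  have hroot : 1 / (-I * (I / t)) ^ (1 / 2 : ℂ) = (√t : ℂ) := by
    have hinv : -I * (I / t) = ((t⁻¹ : ℝ) : ℂ) := by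
      push_cast; linear_combination (-1 / t : ℂ) * I_sq
    rw [hinv, show (1 / 2 : ℂ) = ((1 / 2 : ℝ) : ℂ) by norm_num,
      ← Complex.ofReal_cpow (inv_nonneg.2 ht.le), ← Real.sqrt_eq_rpow, Real.sqrt_inv]
    simp
  have hexp : -π * I * (s : ℂ) ^ 2 / (I / t) = -(π * t * s ^ 2) := by
    field_simp
  have hz : (s : ℂ) / (I / t) = -(I * t * s) := by
    field_simp; linear_combination (s : ℂ) * I_sq
  have hτ : -1 / (I / (t : ℂ)) = I * t := by
    field_simp; linear_combination -I_sq
  rw [jacobiTheta₂_functional_equation, hroot, hexp, hz, hτ, jacobiTheta₂_neg_left, mul_assoc]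

theorem hasSum_cexp_neg_mul_int_add_sq (ht : 0 < t) (s : ℝ) :
    HasSum (fun l : ℤ ↦ cexp ((-(π * t * ((l : ℝ) + s) ^ 2) : ℝ) : ℂ))
      (jacobiTheta₂ s (I / t) / √t) := by
  have hsqrt : (√t : ℂ) ≠ 0 := by exact_mod_cast (Real.sqrt_pos.2 ht).ne'
  have him : 0 < (I * (t : ℂ)).im := by simp [ht]
  rw [jacobiTheta₂_ofReal_I_div ht, mul_div_cancel_left₀ _ hsqrt]
  have complete_square (l : ℤ) : cexp ((-(π * t * ((l : ℝ) + s) ^ 2) : ℝ) : ℂ) =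
      cexp (-(π * t * s ^ 2)) * jacobiTheta₂_term l (I * t * s) (I * t) := by
    rw [jacobiTheta₂_term, ← Complex.exp_add]
    congr 1
    push_cast
    linear_combination (-(2 * π * l * t * s + π * l ^ 2 * t) : ℂ) * I_sq
  simpa only [complete_square] using (hasSum_jacobiTheta₂_term _ him).mul_left _

theorem hasSum_mul_re_im {d : ℤ} {f g : ℤ → ℂ} {a b : ℂ} (hf : HasSum f a) (hg : HasSum g b) :
    HasSum (fun l : ℤ√d ↦ f l.re * g l.im) (a * b) := by
  let reIm : ℤ√d ≃ ℤ × ℤ := ⟨fun z ↦ (z.re, z.im), fun p ↦ ⟨p.1, p.2⟩, fun _ ↦ rfl, fun _ ↦ rfl⟩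
  have hsummable : Summable fun x : ℤ × ℤ ↦ f x.1 * g x.2 :=
    summable_mul_of_summable_norm hf.summable.norm hg.summable.norm
  exact reIm.hasSum_iff.2 (hf.mul hg hsummable)

theorem eT_eq_cexp_im (z : ℂ) : eT z = cexp (2 * π * I * z.im) := by
  rw [eT, ← sub_div, Complex.sub_conj]
  congr 1
  push_cast
  field_simp [I_ne_zero]

theorem Nm_eq_normSq (q : GaussianInt) : Nm q = Complex.normSq (GaussianInt.toComplex q) :=
  GaussianInt.intCast_real_norm q

/-- The common value, up to the factor `t`, of the two sides of Poisson summation for a Gaussian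
centred at `z` on the lattice `ℤ[i]`. The imaginary part comes first because
`ẽ(kz) = exp(2πi Im(kz))` pairs the real coordinate of `k` with `Im z`. -/
def latticeTheta (t : ℝ) (z : ℂ) : ℂ :=
  jacobiTheta₂ z.im (I / t) * jacobiTheta₂ z.re (I / t)

theorem hasSum_cexp_neg_normSq_add (ht : 0 < t) (z : ℂ) :
    HasSum (fun l : GaussianInt ↦
        cexp ((-(π * t * Complex.normSq (GaussianInt.toComplex l + z)) : ℝ) : ℂ))
      (latticeTheta t z / t) := by
  have hsqrt : (√t : ℂ) * √t = t := by rw [← Complex.ofReal_mul, Real.mul_self_sqrt ht.le]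
  have hvalue : latticeTheta t z / t =
      jacobiTheta₂ z.re (I / t) / √t * (jacobiTheta₂ z.im (I / t) / √t) := by
    rw [div_mul_div_comm, hsqrt, latticeTheta, mul_comm (jacobiTheta₂ _ _)]
  rw [hvalue]
  convert hasSum_mul_re_im (hasSum_cexp_neg_mul_int_add_sq ht z.re)
    (hasSum_cexp_neg_mul_int_add_sq ht z.im) using 2
  rw [← Complex.exp_add, ← Complex.ofReal_add, Complex.normSq_apply, Complex.add_re,
    Complex.add_im, ← GaussianInt.intCast_re, ← GaussianInt.intCast_im]
  congr 2
  ring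

theorem hasSum_eT_mul_cexp_neg_Nm_div (ht : 0 < t) (z : ℂ) :
    HasSum (fun k : GaussianInt ↦
        eT (GaussianInt.toComplex k * z) * cexp ((-(π * Nm k / t) : ℝ) : ℂ))
      (latticeTheta t z) := by
  rw [latticeTheta]
  convert hasSum_mul_re_im (hasSum_cexp_mul_cexp_neg_sq_div ht z.im)
    (hasSum_cexp_mul_cexp_neg_sq_div ht z.re) using 2
  rw [eT_eq_cexp_im, Nm_eq_normSq, Complex.normSq_apply, Complex.mul_im,
    ← GaussianInt.intCast_re, ← GaussianInt.intCast_im]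
  simp only [← Complex.exp_add]
  congr 1
  push_cast
  ring

end Theta

section Norm

variable {d : ℤ}

/-- The basis `1, √d` of `ℤ[√d]` over `ℤ`, used to compare the norm of `ℤ[√d]` with the
general algebra norm. -/
def zsqrtdBasis (d : ℤ) : Module.Basis (Fin 2) ℤ (ℤ√d) :=
  Module.Basis.ofEquivFun
    { toFun := fun z ↦ ![z.re, z.im]
      invFun := fun v ↦ ⟨v 0, v 1⟩
      left_inv := fun _ ↦ rfl
      right_inv := fun v ↦ by ext i; fin_cases i <;> rfl
      map_add' := fun _ _ ↦ by simp
      map_smul' := fun _ _ ↦ by simp }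

instance zsqrtd_moduleFree : Module.Free ℤ (ℤ√d) := Module.Free.of_basis (zsqrtdBasis d)

instance zsqrtd_moduleFinite : Module.Finite ℤ (ℤ√d) := Module.Finite.of_basis (zsqrtdBasis d)

theorem zsqrtdBasis_repr (z : ℤ√d) : ⇑((zsqrtdBasis d).repr z) = ![z.re, z.im] := rfl

theorem zsqrtdBasis_zero : zsqrtdBasis d 0 = 1 := by
  apply (zsqrtdBasis d).repr.injective
  ext i
  fin_cases i <;> simp [zsqrtdBasis_repr]

theorem zsqrtdBasis_one : zsqrtdBasis d 1 = Zsqrtd.sqrtd := by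
  apply (zsqrtdBasis d).repr.injective
  ext i
  fin_cases i <;> simp [zsqrtdBasis_repr]

theorem algebraNorm_zsqrtd (z : ℤ√d) : Algebra.norm ℤ z = z.norm := by
  simp only [Algebra.norm_eq_matrix_det (zsqrtdBasis d), Matrix.det_fin_two,
    Algebra.leftMulMatrix_eq_repr_mul, zsqrtdBasis_zero, zsqrtdBasis_one, zsqrtdBasis_repr]
  simp [Zsqrtd.norm_def]

theorem natCard_quotient_span_singleton (z : GaussianInt) :
    Nat.card (GaussianInt ⧸ Ideal.span {z}) = z.norm.natAbs := by
  rw [← algebraNorm_zsqrtd, ← Ideal.absNorm_span_singleton, Ideal.absNorm_apply,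
    Submodule.cardQuot_apply]

theorem finite_quotient_span_singleton {z : GaussianInt} (hz : z ≠ 0) :
    Finite (GaussianInt ⧸ Ideal.span {z}) :=
  Ideal.finiteQuotientOfFreeOfNeBot _ (mt Ideal.span_singleton_eq_bot.1 hz)

theorem Nm_pos {z : GaussianInt} (hz : z ≠ 0) : 0 < Nm z :=
  Int.cast_pos.2 (GaussianInt.norm_pos.2 hz)

end Norm

section GaussSum

variable {q : GaussianInt} {f g : GaussianInt → ℂ} {S : Finset GaussianInt} {y : ℝ}

theorem IsGaussSumChar.apply_zero (hg : IsGaussSumChar q f g) (hq : q ≠ 0) {a : GaussianInt}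
    (ha : IsCoprime a q) (hfa : ∀ x, f (a * x) = f a * f x) (ha1 : f a ≠ 1) : g 0 = 0 := by
  have := finite_quotient_span_singleton hq
  obtain ⟨S, hS⟩ := exists_isResidueSystem q
  have g_zero {T : Finset GaussianInt} (hT : IsResidueSystem q T) : g 0 = ∑ x ∈ T, f x := by
    simp [hg 0 T hT, eT]
  have hmul : f a * g 0 = g 0 :=
    calc f a * g 0 = ∑ x ∈ S, f (a * x) := by simp only [hfa, ← Finset.mul_sum, g_zero hS]
      _ = ∑ x ∈ S.image (a * ·), f x := (Finset.sum_image (hS.injOn_mul_left ha)).symm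
      _ = g 0 := (g_zero (hS.image_mul_left ha)).symm
  exact eq_zero_of_mul_eq_self_left ha1 hmul

theorem hasSum_mul_cexp_neg_Nm (hS : IsResidueSystem q S) (hq : q ≠ 0)
    (hf : ∀ a b, q ∣ a - b → f a = f b) (hy : 0 < y) :
    HasSum (fun m : GaussianInt ↦ f m * cexp ((-(2 * π * y * Nm m) : ℝ) : ℂ))
      (∑ x ∈ S, f x *
        (latticeTheta (2 * y * Nm q) (GaussianInt.toComplex x / GaussianInt.toComplex q) /
          (2 * y * Nm q : ℝ))) := by
  have hqc : GaussianInt.toComplex q ≠ 0 := mt GaussianInt.toComplex_eq_zero.1 hq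
  have ht : 0 < 2 * y * Nm q := mul_pos (mul_pos two_pos hy) (Nm_pos hq)
  refine hS.hasSum_of_hasSum_add_mul hq fun x _ ↦ ?_
  have Nm_coset (l : GaussianInt) : Nm (x + q * l) = Nm q * Complex.normSq
      (GaussianInt.toComplex l + GaussianInt.toComplex x / GaussianInt.toComplex q) := by
    rw [Nm_eq_normSq, Nm_eq_normSq, ← Complex.normSq_mul, mul_add, mul_div_cancel₀ _ hqc,
      map_add, map_mul, add_comm]
  have f_coset (l : GaussianInt) : f (x + q * l) = f x := hf _ _ ⟨l, by ring⟩
  simpa only [f_coset, Nm_coset, mul_assoc, mul_left_comm π] using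
    (hasSum_cexp_neg_normSq_add ht _).mul_left (f x)

theorem IsGaussSumChar.hasSum_mul_cexp_neg_Nm_div (hg : IsGaussSumChar q f g)
    (hS : IsResidueSystem q S) {t : ℝ} (ht : 0 < t) :
    HasSum (fun k : GaussianInt ↦ g k * cexp ((-(π * Nm k / t) : ℝ) : ℂ))
      (∑ x ∈ S, f x *
        latticeTheta t (GaussianInt.toComplex x / GaussianInt.toComplex q)) := by
  have eT_mul_div (k x : GaussianInt) :
      eT (GaussianInt.toComplex (k * x) / GaussianInt.toComplex q) =
        eT (GaussianInt.toComplex k * (GaussianInt.toComplex x / GaussianInt.toComplex q)) := by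
    rw [map_mul, mul_div_assoc]
  simp only [hg _ S hS, Finset.sum_mul, eT_mul_div, mul_assoc]
  exact hasSum_sum fun x _ ↦ (hasSum_eT_mul_cexp_neg_Nm_div ht _).mul_left (f x)

theorem IsGaussSumChar.poisson_summation (hg : IsGaussSumChar q f g) (hq : q ≠ 0)
    (hf : ∀ a b, q ∣ a - b → f a = f b) (hy : 0 < y) :
    ∑' m : GaussianInt, f m * cexp ((-(2 * π * y * Nm m) : ℝ) : ℂ) =
      ((1 / (2 * y * Nm q) : ℝ) : ℂ) *
        ∑' k : GaussianInt, g k * cexp ((-(π * Nm k / (2 * y * Nm q)) : ℝ) : ℂ) := by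
  have := finite_quotient_span_singleton hq
  obtain ⟨S, hS⟩ := exists_isResidueSystem q
  have ht : 0 < 2 * y * Nm q := mul_pos (mul_pos two_pos hy) (Nm_pos hq)
  rw [(hasSum_mul_cexp_neg_Nm hS hq hf hy).tsum_eq,
    (hg.hasSum_mul_cexp_neg_Nm_div hS ht).tsum_eq, Finset.mul_sum]
  refine Finset.sum_congr rfl fun x _ ↦ ?_
  push_cast
  ring

theorem tsum_ne_zero_eq_tsum {α E : Type*} [Zero α] [AddCommMonoid E] [TopologicalSpace E]
    {F : α → E} (h0 : F 0 = 0) : ∑' a : {a : α // a ≠ 0}, F a = ∑' a, F a :=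
  tsum_subtype_eq_of_support_subset (s := {a | a ≠ 0}) fun _ ha h ↦ ha (h ▸ h0)

theorem IsGaussSumChar.poisson_summation_ne_zero (hg : IsGaussSumChar q f g) (hq : q ≠ 0)
    (hf : ∀ a b, q ∣ a - b → f a = f b) {a : GaussianInt} (ha : IsCoprime a q)
    (hfa : ∀ x, f (a * x) = f a * f x) (ha1 : f a ≠ 1) (hy : 0 < y) :
    ∑' m : {m : GaussianInt // m ≠ 0}, f m * cexp ((-(2 * π * y * Nm m) : ℝ) : ℂ) =
      ((1 / (2 * y * Nm q) : ℝ) : ℂ) *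
        ∑' k : {k : GaussianInt // k ≠ 0},
          g k * cexp ((-(π * Nm k / (2 * y * Nm q)) : ℝ) : ℂ) := by
  have f_zero : f 0 = 0 := eq_zero_of_mul_eq_self_left ha1 (by rw [← hfa, mul_zero])
  rw [tsum_ne_zero_eq_tsum (F := fun m ↦ f m * cexp ((-(2 * π * y * Nm m) : ℝ) : ℂ))
      (by simp [f_zero]),
    tsum_ne_zero_eq_tsum (F := fun k ↦ g k * cexp ((-(π * Nm k / (2 * y * Nm q)) : ℝ) : ℂ))
      (by simp [hg.apply_zero hq ha hfa ha1])]
  exact hg.poisson_summation hq hf hy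

end GaussSum

section OddGaussianIntegers

variable {n : GaussianInt}

theorem irreducible_of_irreducible_norm {d : ℤ} {z : ℤ√d} (h : Irreducible z.norm) :
    Irreducible z := by
  have : IsLocalHom (Zsqrtd.normMonoidHom (d := d)) :=
    ⟨fun z hz ↦ (Zsqrtd.isUnit_iff_norm_isUnit z).2 hz⟩
  exact Irreducible.of_map (f := Zsqrtd.normMonoidHom (d := d)) h

theorem prime_ωg : Prime ωg :=
  (irreducible_of_irreducible_norm (z := ωg) Int.prime_two.irreducible).prime

theorem isCoprime_two_of_not_ωg_dvd (hn : ¬ ωg ∣ n) : IsCoprime n 2 := by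
  have two_dvd_ωg_sq : 2 ∣ ωg ^ 2 := ⟨ig, by decide⟩
  exact ((prime_ωg.irreducible.coprime_iff_not_dvd.2 hn).symm.pow_right).of_isCoprime_of_dvd_right
    two_dvd_ωg_sq

theorem IsPrimary.not_ωg_dvd (hn : IsPrimary n) : ¬ ωg ∣ n := fun h ↦
  prime_ωg.not_dvd_one ((dvd_sub_right h).1 (dvd_of_mul_left_dvd hn))

theorem isUnit_re_eq_zero_or_isSquare {u : GaussianInt} (hu : IsUnit u) :
    u.re = 0 ∨ IsSquare u := by
  have hnorm : u.re * u.re + u.im * u.im = 1 := by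
    have h := (Zsqrtd.norm_eq_one_iff' (by norm_num) u).2 hu
    rw [Zsqrtd.norm_def] at h
    linarith
  refine or_iff_not_imp_left.2 fun hre ↦ ?_
  have him : u.im = 0 := by
    have := mul_self_pos.2 hre
    exact mul_self_eq_zero.1 (le_antisymm (by linarith) (mul_self_nonneg _))
  rw [him, mul_zero, add_zero, mul_self_eq_one_iff] at hnorm
  rcases hnorm with hre | hre
  · exact ⟨1, Zsqrtd.ext hre him⟩
  · exact ⟨ig, Zsqrtd.ext hre him⟩

theorem isSquare_of_associated_sq {s : GaussianInt} (h : Associated (s ^ 2) n) (hn : Odd n.re) :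
    IsSquare n := by
  obtain ⟨u, rfl⟩ := h
  rcases isUnit_re_eq_zero_or_isSquare u.isUnit with hu | hu
  · refine absurd hn (Int.not_odd_iff_even.2 ⟨-(s.re * s.im * (u : GaussianInt).im), ?_⟩)
    simp only [sq, Zsqrtd.re_mul, Zsqrtd.im_mul, hu]
    ring
  · exact (IsSquare.sq s).mul hu

theorem associated_sq_or_exists_odd_pow_mul {α : Type*} [CommMonoidWithZero α]
    [UniqueFactorizationMonoid α] (x : α) : (∃ s, Associated (s ^ 2) x) ∨
      ∃ p m : α, ∃ k : ℕ, Prime p ∧ ¬ p ∣ m ∧ x = p ^ (2 * k + 1) * m := by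
  induction x using UniqueFactorizationMonoid.induction_on_coprime with
  | h0 => exact Or.inl ⟨0, by simp⟩
  | h1 hx => exact Or.inl ⟨1, by simpa using (associated_one_iff_isUnit.2 hx).symm⟩
  | @hpr p i hp =>
    rcases i.even_or_odd' with ⟨k, rfl | rfl⟩
    · exact Or.inl ⟨p ^ k, by rw [← pow_mul']⟩
    · exact Or.inr ⟨p, 1, k, hp, hp.not_dvd_one, (mul_one _).symm⟩
  | @hcp x y hxy hx hy =>
    rcases hx with ⟨s, hs⟩ | ⟨p, m, k, hp, hpm, rfl⟩
    · rcases hy with ⟨t, ht⟩ | ⟨p, m, k, hp, hpm, rfl⟩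
      · exact Or.inl ⟨s * t, by simpa only [mul_pow] using hs.mul_mul ht⟩
      · have hpx : ¬ p ∣ x := fun h ↦
          hp.not_isUnit (hxy h ((dvd_pow_self p (by omega)).mul_right m))
        exact Or.inr ⟨p, x * m, k, hp, hp.not_dvd_mul hpx hpm, mul_left_comm _ _ _⟩
    · have hpy : ¬ p ∣ y := fun h ↦
        hp.not_isUnit (hxy ((dvd_pow_self p (by omega)).mul_right m) h)
      exact Or.inr ⟨p, m * y, k, hp, hp.not_dvd_mul hpm hpy, mul_assoc _ _ _⟩

end OddGaussianIntegers

section QuadraticSymbol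

section ResidueField

variable {p : GaussianInt} [hp : Fact (Prime p)]

instance isMaximal_span_singleton_prime : (Ideal.span {p}).IsMaximal :=
  PrincipalIdealRing.isMaximal_of_irreducible hp.out.irreducible

instance residueField : Field (GaussianInt ⧸ Ideal.span {p}) := Ideal.Quotient.field _

instance residueFieldFintype : Fintype (GaussianInt ⧸ Ideal.span {p}) :=
  have := finite_quotient_span_singleton hp.out.ne_zero
  Fintype.ofFinite _

theorem ringChar_residueField_ne_two (hodd : ¬ ωg ∣ p) :
    ringChar (GaussianInt ⧸ Ideal.span {p}) ≠ 2 := by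
  intro hchar
  have two_eq_zero : Ideal.Quotient.mk (Ideal.span {p}) 2 = 0 :=
    (ringChar.spec (GaussianInt ⧸ Ideal.span {p}) 2).2 hchar.dvd
  rw [Ideal.Quotient.eq_zero_iff_dvd] at two_eq_zero
  exact hp.out.irreducible.coprime_iff_not_dvd.1 (isCoprime_two_of_not_ωg_dvd hodd) two_eq_zero

theorem IsQuadSym.apply_prime {χ : GaussianInt → GaussianInt → ℤ} (hχ : IsQuadSym χ)
    (hodd : ¬ ωg ∣ p) (a : GaussianInt) :
    χ a p = quadraticChar (GaussianInt ⧸ Ideal.span {p}) (Ideal.Quotient.mk _ a) := by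
  by_cases hpa : p ∣ a
  · rw [hχ.zero_of_dvd p a hp.out hpa, (Ideal.Quotient.eq_zero_iff_dvd p a).2 hpa,
      quadraticChar_zero]
  have hchar := ringChar_residueField_ne_two hodd
  have mk_ne_zero : Ideal.Quotient.mk (Ideal.span {p}) a ≠ 0 :=
    mt (Ideal.Quotient.eq_zero_iff_dvd p a).1 hpa
  obtain ⟨hsign, heuler⟩ := hχ.val_prime p a hp.out hodd hpa
  have hexponent : (p.norm.toNat - 1) / 2 =
      Fintype.card (GaussianInt ⧸ Ideal.span {p}) / 2 := by
    have hcard := natCard_quotient_span_singleton p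
    have hcard_odd := FiniteField.odd_card_of_char_ne_two hchar
    have := GaussianInt.norm_nonneg p
    rw [Nat.card_eq_fintype_card] at hcard
    omega
  refine Int.cast_injOn_of_ringChar_ne_two hchar ?_ ?_ ?_
  · rcases hsign with h | h <;> simp [h]
  · rcases quadraticChar_dichotomy mk_ne_zero with h | h <;> simp [h]
  · rw [← Ideal.Quotient.eq_zero_iff_dvd, map_sub, map_pow, map_intCast, sub_eq_zero] at heuler
    rw [← heuler, hexponent, quadraticChar_eq_pow_of_char_ne_two' hchar]

end ResidueField

namespace IsQuadSym

variable {χ : GaussianInt → GaussianInt → ℤ} {n : GaussianInt}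

theorem exists_monoidHom (hχ : IsQuadSym χ) (hn : ¬ ωg ∣ n) :
    ∃ ψ : (GaussianInt ⧸ Ideal.span {n}) →* ℤ, ∀ a, χ a n = ψ (Ideal.Quotient.mk _ a) := by
  induction n using UniqueFactorizationMonoid.induction_on_prime with
  | h₁ => exact absurd (dvd_zero ωg) hn
  | h₂ u hu => exact ⟨1, fun a ↦ hχ.unit_den a u hu⟩
  | h₃ m p _ hp ih =>
    have := Fact.mk hp
    have hp_odd : ¬ ωg ∣ p := fun h ↦ hn (h.mul_right m)
    have hm_odd : ¬ ωg ∣ m := fun h ↦ hn (h.mul_left p)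
    obtain ⟨ψ, hψ⟩ := ih hm_odd
    have le_span_p : Ideal.span {p * m} ≤ Ideal.span {p} :=
      Ideal.span_singleton_le_span_singleton.2 (dvd_mul_right p m)
    have le_span_m : Ideal.span {p * m} ≤ Ideal.span {m} :=
      Ideal.span_singleton_le_span_singleton.2 (dvd_mul_left m p)
    refine ⟨(quadraticChar (GaussianInt ⧸ Ideal.span {p})).toMonoidHom.comp
        (Ideal.Quotient.factor le_span_p : _ →* _) *
      ψ.comp (Ideal.Quotient.factor le_span_m : _ →* _), fun a ↦ ?_⟩
    rw [hχ.mul_den a p m hp_odd hm_odd, hχ.apply_prime hp_odd, hψ]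
    rfl

theorem map_mul (hχ : IsQuadSym χ) (hn : ¬ ωg ∣ n) (a b : GaussianInt) :
    χ (a * b) n = χ a n * χ b n := by
  obtain ⟨ψ, hψ⟩ := hχ.exists_monoidHom hn
  simp only [hψ, _root_.map_mul]

theorem map_one (hχ : IsQuadSym χ) (hn : ¬ ωg ∣ n) : χ 1 n = 1 := by
  obtain ⟨ψ, hψ⟩ := hχ.exists_monoidHom hn
  simp only [hψ, _root_.map_one]

theorem congr (hχ : IsQuadSym χ) (hn : ¬ ωg ∣ n) {a b : GaussianInt} (h : n ∣ a - b) :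
    χ a n = χ b n := by
  obtain ⟨ψ, hψ⟩ := hχ.exists_monoidHom hn
  rw [hψ, hψ, Ideal.Quotient.eq.2 (Ideal.mem_span_singleton.2 h)]

theorem pow_den (hχ : IsQuadSym χ) (hn : ¬ ωg ∣ n) (a : GaussianInt) (k : ℕ) :
    χ a (n ^ k) = χ a n ^ k := by
  induction k with
  | zero => rw [pow_zero, pow_zero, hχ.unit_den a 1 isUnit_one]
  | succ k ih =>
    rw [pow_succ, pow_succ, hχ.mul_den a _ _ (mt prime_ωg.dvd_of_dvd_pow hn) hn, ih]

theorem exists_apply_prime_eq_neg_one (hχ : IsQuadSym χ) {p : GaussianInt} (hp : Prime p)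
    (hodd : ¬ ωg ∣ p) : ∃ c, χ c p = -1 := by
  have := Fact.mk hp
  obtain ⟨c, hc⟩ := quadraticChar_exists_neg_one (ringChar_residueField_ne_two hodd)
  obtain ⟨c, rfl⟩ := Ideal.Quotient.mk_surjective c
  exact ⟨c, by rw [hχ.apply_prime hodd, hc]⟩

theorem exists_isCoprime_apply_eq_neg_one (hχ : IsQuadSym χ) (hn : ¬ ωg ∣ n)
    (hsq : ¬ ∃ s, Associated (s ^ 2) n) : ∃ a, IsCoprime a (2 * n) ∧ χ a n = -1 := by
  obtain ⟨p, m, k, hp, hpm, rfl⟩ := (associated_sq_or_exists_odd_pow_mul n).resolve_left hsq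
  have hp_odd : ¬ ωg ∣ p := fun h ↦ hn ((h.trans (dvd_pow_self p (by omega))).mul_right m)
  have hm_odd : ¬ ωg ∣ m := fun h ↦ hn (h.mul_left _)
  obtain ⟨c, hc⟩ := hχ.exists_apply_prime_eq_neg_one hp hp_odd
  have hpc : ¬ p ∣ c := fun h ↦ by simp [hχ.zero_of_dvd p c hp h] at hc
  obtain ⟨a, hac, ha1⟩ := exists_dvd_sub_dvd_sub_of_isCoprime
    ((isCoprime_two_of_not_ωg_dvd hp_odd).mul_right
      (hp.irreducible.coprime_iff_not_dvd.2 hpm)) c 1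
  have ha_coprime_p : IsCoprime a p :=
    isCoprime_of_dvd_sub hac (hp.irreducible.coprime_iff_not_dvd.2 hpc).symm
  have ha_coprime_2m : IsCoprime a (2 * m) := isCoprime_of_dvd_sub ha1 isCoprime_one_left
  refine ⟨a, mul_left_comm 2 _ m ▸ ha_coprime_p.pow_right.mul_right ha_coprime_2m, ?_⟩
  calc χ a (p ^ (2 * k + 1) * m) = χ c p ^ (2 * k + 1) * χ 1 m := by
        rw [hχ.mul_den a _ m (mt prime_ωg.dvd_of_dvd_pow hp_odd) hm_odd, hχ.pow_den hp_odd,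
          hχ.congr hp_odd hac, hχ.congr hm_odd (dvd_of_mul_left_dvd ha1)]
    _ = -1 := by rw [hc, hχ.map_one hm_odd, mul_one, Odd.neg_one_pow (odd_two_mul_add_one k)]

end IsQuadSym

end QuadraticSymbol

section TwistedCharacter

variable {χ : GaussianInt → GaussianInt → ℤ} {n : GaussianInt}

theorem psi1_mul (a b : GaussianInt) : psi1 (a * b) = psi1 a * psi1 b := by
  simp only [psi1, IsCoprime.mul_left_iff, ite_and, mul_ite, mul_one, mul_zero]
  split_ifs <;> rfl

theorem psi1_congr {a b : GaussianInt} (h : 2 ∣ a - b) : psi1 a = psi1 b := by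
  obtain ⟨c, hc⟩ := h
  rw [psi1, psi1, sub_eq_iff_eq_add'.1 hc, IsCoprime.add_mul_left_left_iff]

theorem two_dvd_iff_even (z : GaussianInt) : 2 ∣ z ↔ Even z.re ∧ Even z.im := by
  rw [even_iff_two_dvd, even_iff_two_dvd]
  exact_mod_cast Zsqrtd.intCast_dvd 2 z

theorem psi2_eq_ite_even (m : GaussianInt) : psi2 m =
    if Even m.re then (if Even m.im then 0 else -1) else (if Even m.im then 1 else 0) := by
  simp only [psi2, two_dvd_iff_even, ig, Zsqrtd.re_sub, Zsqrtd.im_sub, Zsqrtd.re_one,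
    Zsqrtd.im_one, sub_zero, Int.even_sub_one]
  split_ifs <;> tauto

theorem psi2_mul (a b : GaussianInt) : psi2 (a * b) = psi2 a * psi2 b := by
  simp only [psi2_eq_ite_even, Zsqrtd.re_mul, Zsqrtd.im_mul, Int.even_add, Int.even_mul,
    Int.not_even_one, even_neg]
  by_cases Even a.re <;> by_cases Even a.im <;> by_cases Even b.re <;> by_cases Even b.im <;>
    simp [*]

theorem psi2_congr {a b : GaussianInt} (h : 2 ∣ a - b) : psi2 a = psi2 b := by
  rw [two_dvd_iff_even, Zsqrtd.re_sub, Zsqrtd.im_sub, Int.even_sub, Int.even_sub] at h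
  simp only [psi2_eq_ite_even, h.1, h.2]

theorem tchi_mul (hχ : IsQuadSym χ) (hn : ¬ ωg ∣ n) (a b : GaussianInt) :
    tchi χ n (a * b) = tchi χ n a * tchi χ n b := by
  rw [tchi, tchi, tchi, hχ.map_mul hn, psi1_mul, psi2_mul, Int.cast_mul]
  split_ifs <;> ring

theorem tchi_congr (hχ : IsQuadSym χ) (hn : ¬ ωg ∣ n) {a b : GaussianInt} (h : 2 * n ∣ a - b) :
    tchi χ n a = tchi χ n b := by
  have h2 : 2 ∣ a - b := dvd_of_mul_right_dvd h
  rw [tchi, tchi, hχ.congr hn (dvd_of_mul_left_dvd h), psi1_congr h2, psi2_congr h2]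

theorem exists_isCoprime_tchi_ne_one (hχ : IsQuadSym χ) (hn : ¬ ωg ∣ n)
    (hsq : IsTypeOne n → ¬ IsSquare n) : ∃ a, IsCoprime a (2 * n) ∧ tchi χ n a ≠ 1 := by
  suffices ∃ a, IsCoprime a (2 * n) ∧ tchi χ n a = -1 by
    obtain ⟨a, ha, h⟩ := this
    exact ⟨a, ha, h ▸ by norm_num⟩
  by_cases htype : IsTypeOne n
  · have hre : Odd n.re := Int.odd_iff.2 (by have := htype.1; omega)
    obtain ⟨a, ha, hχa⟩ := hχ.exists_isCoprime_apply_eq_neg_one hn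
      fun ⟨s, hs⟩ ↦ hsq htype (isSquare_of_associated_sq hs hre)
    exact ⟨a, ha, by simp [tchi, htype, psi1, ha.of_mul_right_left, hχa]⟩
  · obtain ⟨a, ha1, hai⟩ :=
      exists_dvd_sub_dvd_sub_of_isCoprime (isCoprime_two_of_not_ωg_dvd hn) 1 ig
    have hig : IsCoprime ig 2 := by exact ⟨-ig, 0, by decide⟩
    refine ⟨a, (isCoprime_of_dvd_sub hai hig).mul_right
      (isCoprime_of_dvd_sub ha1 isCoprime_one_left), ?_⟩
    have psi2_ig : psi2 ig = -1 := by simp [psi2_eq_ite_even, ig]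
    simp [tchi, htype, psi2_congr hai, psi2_ig, hχ.congr hn ha1, hχ.map_one hn]

end TwistedCharacter

theorem theta_identity_tilde_chi_general
    {χ : GaussianInt → GaussianInt → ℤ} (hχ : IsQuadSym χ)
    {n : GaussianInt} (hn : ¬ ωg ∣ n) (hsq : IsTypeOne n → ¬ IsSquare n)
    {g : GaussianInt → ℂ} (hg : IsGaussSumChar (2 * n) (tchi χ n) g)
    {y : ℝ} (hy : 0 < y) :
    ∑' m : {m : GaussianInt // m ≠ 0},
        tchi χ n m * cexp ((-(2 * π * y * Nm m) : ℝ) : ℂ) =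
      ((1 / (2 * y * Nm (2 * n)) : ℝ) : ℂ) *
        ∑' k : {k : GaussianInt // k ≠ 0},
          g k * cexp ((-(π * Nm k / (2 * y * Nm (2 * n))) : ℝ) : ℂ) := by
  have two_mul_ne_zero : 2 * n ≠ 0 := mul_ne_zero two_ne_zero fun h ↦ hn (h ▸ dvd_zero ωg)
  obtain ⟨a, ha_coprime, ha_ne_one⟩ := exists_isCoprime_tchi_ne_one hχ hn hsq
  exact hg.poisson_summation_ne_zero two_mul_ne_zero (fun _ _ ↦ tchi_congr hχ hn) ha_coprime
    (tchi_mul hχ hn a) ha_ne_one hy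

/-- the theta-function identity (2.11) of the paper: for primary non-square `n`
and every `y > 0`, the twisted theta series of `χ̃_n` satisfies the indicated Poisson-type
identity. -/
theorem theta_identity_tilde_chi
    (χ : GaussianInt → GaussianInt → ℤ) (hχ : IsQuadSym χ)
    (n : GaussianInt) (hn : IsPrimary n) (hns : ¬ ∃ m : GaussianInt, n = m ^ 2)
    (g : GaussianInt → ℂ) (hg : IsGaussSumChar (2 * n) (tchi χ n) g)
    (y : ℝ) (hy : 0 < y) :
    ∑' m : {m : GaussianInt // m ≠ 0},
        tchi χ n m.1 * Complex.exp (((-(2 * Real.pi * y * Nm m.1)) : ℝ) : ℂ) =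
      ((1 / (2 * y * Nm (2 * n)) : ℝ) : ℂ) *
        ∑' k : {k : GaussianInt // k ≠ 0},
          g k.1 * Complex.exp (((-(Real.pi * Nm k.1 / (2 * y * Nm (2 * n)))) : ℝ) : ℂ) :=
  theta_identity_tilde_chi_general hχ hn.not_ωg_dvd
    (fun _ hsq ↦ hns ((isSquare_iff_exists_sq n).1 hsq)) hg hy
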